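/- Let p > 1 with 1/p + 1/q = 1, and let f, g be two positive continuous functions on [0, ∞) such that for x > 0 the integrals I^{α,β,η,μ}_{x,k}[f^p] and I^{α,β,η,μ}_{x,k}[g^q] are finite. If 0 < m ≤ f(τ)^p / g(τ)^q ≤ M < ∞ for all τ ∈ (0, x), then (I^{α,β,η,μ}_{x,k}[f^p])^{1/p} · (I^{α,β,η,μ}_{x,k}[g^q])^{1/q} ≤ (M/m)^{1/(pq)} · I^{α,β,η,μ}_{x,k}[f·g]. -/

import Mathlib

/-!
The operator is integration against the weight `w(τ) = Fker τ * τ ^ k`, which is nonnegative on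
`(0, x)`: since `α + β + μ`, `-η` and `α` are positive, every coefficient of the hypergeometric
series is nonnegative (`gauss2F1_nonneg`). For such a weight this is the classical
reverse Hölder inequality. From `f ^ p ≤ M g ^ q` one gets `f ^ p ≤ M ^ (1/q) f g` pointwise, and
from `g ^ q ≤ m⁻¹ f ^ p` one gets `g ^ q ≤ (m⁻¹) ^ (1/p) f g` (`rpow_le_mul_of_ratio`). Integrating
both, taking the powers `1/p` and `1/q`, and multiplying gives the claim because `1/p + 1/q = 1`.
-/

open MeasureTheory Real Set

/-- The Gauss hypergeometric series `₂F₁(a, b; c; z)`. -/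
noncomputable def gauss2F1 (a b c z : ℝ) : ℝ :=
  ∑' n : ℕ, ((ascPochhammer ℝ n).eval a * (ascPochhammer ℝ n).eval b /
    ((ascPochhammer ℝ n).eval c * (n.factorial : ℝ))) * z ^ n

/-- The kernel `F(x, τ)` of the generalized k-fractional integral operator. -/
noncomputable def Fker (α β η μ k x τ : ℝ) : ℝ :=
  ((k + 1) ^ (μ + β + 1) * x ^ ((k + 1) * (-α - β - 2 * μ)) / Real.Gamma α) *
    τ ^ ((k + 1) * μ) * (x ^ (k + 1) - τ ^ (k + 1)) ^ (α - 1) *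
    gauss2F1 (α + β + μ) (-η) α (1 - (τ / x) ^ (k + 1))

/-- The generalized k-fractional integral operator `I^{α,β,η,μ}_{x,k}[f]`. -/
noncomputable def genKInt (α β η μ k x : ℝ) (f : ℝ → ℝ) : ℝ :=
  ∫ τ in (0:ℝ)..x, Fker α β η μ k x τ * τ ^ k * f τ

/-- With positive parameters the Gauss series has nonnegative terms for `z ≥ 0`. Convergence is
not needed, since a divergent `tsum` is `0`. -/
lemma gauss2F1_nonneg {a b c z : ℝ} (ha : 0 < a) (hb : 0 < b) (hc : 0 < c) (hz : 0 ≤ z) :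
    0 ≤ gauss2F1 a b c z := by
  refine tsum_nonneg fun n => ?_
  have h1 := ascPochhammer_pos n a ha
  have h2 := ascPochhammer_pos n b hb
  have h3 := ascPochhammer_pos n c hc
  positivity

lemma Fker_nonneg {α β η μ k x τ : ℝ} (hk : 0 ≤ k) (hα : 0 < α) (hαβ : 0 < α + β + μ)
    (hη : η < 0) (hτ : 0 < τ) (hτx : τ < x) : 0 ≤ Fker α β η μ k x τ := by
  have hx : 0 < x := hτ.trans hτx
  have hΓ := Real.Gamma_pos_of_pos hα
  have h1 : 0 ≤ x ^ (k + 1) - τ ^ (k + 1) :=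
    sub_nonneg.2 (rpow_le_rpow hτ.le hτx.le (by linarith))
  have h2 : (τ / x) ^ (k + 1) ≤ 1 :=
    rpow_le_one (by positivity) ((div_le_one hx).2 hτx.le) (by linarith)
  have h3 : 0 ≤ gauss2F1 (α + β + μ) (-η) α (1 - (τ / x) ^ (k + 1)) :=
    gauss2F1_nonneg hαβ (by linarith) hα (by linarith)
  have h4 := rpow_nonneg h1 (α - 1)
  unfold Fker
  positivity

/-- Pointwise core of the reverse Hölder inequality. -/
lemma rpow_le_mul_of_ratio {p q a b C : ℝ} (hpq : p.HolderConjugate q) (ha : 0 < a) (hb : 0 < b)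
    (hC : 0 ≤ C) (h : a ^ p ≤ C * b ^ q) : a ^ p ≤ C ^ (1 / q) * (a * b) := by
  have hq := hpq.symm.pos
  have h1 : (a ^ p) ^ (1 / q) ≤ (C * b ^ q) ^ (1 / q) :=
    rpow_le_rpow (by positivity) h (by positivity)
  have e : p * (1 / q) = p - 1 := by
    have := hpq.sub_one_mul_conj
    field_simp
    linarith
  rw [mul_rpow hC (by positivity), ← rpow_mul ha.le, ← rpow_mul hb.le, e,
    mul_one_div_cancel hq.ne', rpow_one] at h1
  calc a ^ p = a * a ^ (p - 1) := by
        rw [rpow_sub_one ha.ne']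
        field_simp
    _ ≤ a * (C ^ (1 / q) * b) := by gcongr
    _ = _ := by ring

/-- Reverse Hölder inequality for a general nonnegative weight on `(0, x)`. -/
lemma reverse_holder_weight {p q m M x : ℝ} {w f g : ℝ → ℝ} (hpq : p.HolderConjugate q)
    (hx : 0 < x) (hm : 0 < m) (hw : ∀ τ ∈ Ioo 0 x, 0 ≤ w τ)
    (hfc : ContinuousOn f (Ici 0)) (hgc : ContinuousOn g (Ici 0))
    (hfpos : ∀ t ∈ Ici (0:ℝ), 0 < f t) (hgpos : ∀ t ∈ Ici (0:ℝ), 0 < g t)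
    (hf : IntervalIntegrable (fun τ => w τ * f τ ^ p) volume 0 x)
    (hg : IntervalIntegrable (fun τ => w τ * g τ ^ q) volume 0 x)
    (hbd : ∀ τ ∈ Ioo (0:ℝ) x, m ≤ f τ ^ p / g τ ^ q ∧ f τ ^ p / g τ ^ q ≤ M) :
    (∫ τ in (0:ℝ)..x, w τ * f τ ^ p) ^ (1 / p) * (∫ τ in (0:ℝ)..x, w τ * g τ ^ q) ^ (1 / q) ≤
      (M / m) ^ (1 / (p * q)) * ∫ τ in (0:ℝ)..x, w τ * (f τ * g τ) := by
  have hp := hpq.pos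
  have hq := hpq.symm.pos
  have hM : 0 < M := by
    obtain ⟨h1, h2⟩ := hbd (x / 2) ⟨by linarith, by linarith⟩
    linarith
  have hsub : uIcc 0 x ⊆ Ici 0 := by
    rw [uIcc_of_le hx.le]
    exact Icc_subset_Ici_self
  have hfg : IntervalIntegrable (fun τ => w τ * (f τ * g τ)) volume 0 x := by
    -- `f g` is `f ^ p` times a function continuous on the compact interval.
    have hc : ContinuousOn (fun τ => f τ * g τ / f τ ^ p) (uIcc 0 x) :=
      ((hfc.mul hgc).div (hfc.rpow_const fun t ht => Or.inl (hfpos t ht).ne')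
        fun t ht => (rpow_pos_of_pos (hfpos t ht) p).ne').mono hsub
    refine (hf.mul_continuousOn hc).congr fun τ hτ => ?_
    have := (rpow_pos_of_pos (hfpos τ (hsub (uIoc_subset_uIcc hτ))) p).ne'
    field_simp
  have hnn : ∀ u : ℝ → ℝ, (∀ τ ∈ Ioo 0 x, 0 ≤ u τ) → 0 ≤ ∫ τ in (0:ℝ)..x, w τ * u τ := by
    intro u hu
    rw [intervalIntegral.integral_of_le hx.le, integral_Ioc_eq_integral_Ioo]
    exact setIntegral_nonneg measurableSet_Ioo fun τ hτ => mul_nonneg (hw τ hτ) (hu τ hτ)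
  have hcmp : ∀ (u : ℝ → ℝ) (K : ℝ), IntervalIntegrable (fun τ => w τ * u τ) volume 0 x →
      (∀ τ ∈ Ioo 0 x, u τ ≤ K * (f τ * g τ)) →
      ∫ τ in (0:ℝ)..x, w τ * u τ ≤ K * ∫ τ in (0:ℝ)..x, w τ * (f τ * g τ) := by
    intro u K hu h
    rw [← intervalIntegral.integral_const_mul]
    refine intervalIntegral.integral_mono_on_of_le_Ioo hx.le hu (hfg.const_mul K) fun τ hτ => ?_
    nlinarith [mul_le_mul_of_nonneg_left (h τ hτ) (hw τ hτ)]
  have hF : ∀ τ ∈ Ioo 0 x, 0 < f τ := fun τ hτ => hfpos τ hτ.1.le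
  have hG : ∀ τ ∈ Ioo 0 x, 0 < g τ := fun τ hτ => hgpos τ hτ.1.le
  have hA := hcmp (fun τ => f τ ^ p) (M ^ (1 / q)) hf fun τ hτ =>
    rpow_le_mul_of_ratio hpq (hF τ hτ) (hG τ hτ) hM.le
      ((div_le_iff₀ (rpow_pos_of_pos (hG τ hτ) q)).1 (hbd τ hτ).2)
  have hB := hcmp (fun τ => g τ ^ q) (m⁻¹ ^ (1 / p)) hg fun τ hτ => by
    rw [mul_comm (f τ)]
    refine rpow_le_mul_of_ratio hpq.symm (hG τ hτ) (hF τ hτ) (by positivity) ?_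
    have := (le_div_iff₀ (rpow_pos_of_pos (hG τ hτ) q)).1 (hbd τ hτ).1
    rwa [inv_mul_eq_div, le_div_iff₀ hm, mul_comm]
  have hA0 := hnn (fun τ => f τ ^ p) fun τ hτ => (rpow_pos_of_pos (hF τ hτ) p).le
  have hB0 := hnn (fun τ => g τ ^ q) fun τ hτ => (rpow_pos_of_pos (hG τ hτ) q).le
  have hI0 := hnn (fun τ => f τ * g τ) fun τ hτ => (mul_pos (hF τ hτ) (hG τ hτ)).le
  beta_reduce at hA hB hA0 hB0 hI0
  set I := ∫ τ in (0:ℝ)..x, w τ * (f τ * g τ)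
  calc _ ≤ (M ^ (1 / q) * I) ^ (1 / p) * (m⁻¹ ^ (1 / p) * I) ^ (1 / q) := by gcongr
    _ = (M ^ (1 / (p * q)) * m⁻¹ ^ (1 / (p * q))) * (I ^ (1 / p) * I ^ (1 / q)) := by
        rw [mul_rpow (by positivity) hI0, mul_rpow (by positivity) hI0, ← rpow_mul hM.le,
          ← rpow_mul (by positivity), one_div_mul_one_div, one_div_mul_one_div, mul_comm q p]
        ring
    _ = _ := by
        rw [← mul_rpow hM.le (by positivity), ← rpow_add_of_nonneg hI0 (by positivity)
          (by positivity), one_div p, one_div q, hpq.inv_add_inv_eq_one, rpow_one, div_eq_mul_inv M m]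

theorem holder_type_powers (α β η μ k x : ℝ)
    (hk : 0 ≤ k) (hα : max 0 (-β - μ) < α) (hβ : β < 1) (hμ : -1 < μ)
    (hη1 : β - 1 < η) (hη2 : η < 0) (hx : 0 < x) (p q m M : ℝ) (f g : ℝ → ℝ)
    (hfc : ContinuousOn f (Ici 0)) (hgc : ContinuousOn g (Ici 0))
    (hfpos : ∀ t ∈ Ici (0:ℝ), 0 < f t) (hgpos : ∀ t ∈ Ici (0:ℝ), 0 < g t)
    (hp : 1 < p) (hpq : 1 / p + 1 / q = 1) (hm : 0 < m)
    (hfin_f : IntervalIntegrable (fun τ => Fker α β η μ k x τ * τ ^ k * (f τ ^ p)) volume 0 x)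
    (hfin_g : IntervalIntegrable (fun τ => Fker α β η μ k x τ * τ ^ k * (g τ ^ q)) volume 0 x)
    (hbd : ∀ τ ∈ Ioo (0:ℝ) x, m ≤ f τ ^ p / g τ ^ q ∧ f τ ^ p / g τ ^ q ≤ M) :
    (genKInt α β η μ k x (fun τ => f τ ^ p)) ^ (1 / p) * (genKInt α β η μ k x (fun τ => g τ ^ q)) ^ (1 / q) ≤
      (M / m) ^ (1 / (p * q)) * (genKInt α β η μ k x (fun τ => f τ * g τ)) := by
  have hconj : p.HolderConjugate q :=
    Real.holderConjugate_iff.2 ⟨hp, by simpa only [one_div] using hpq⟩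
  obtain ⟨h0, h1⟩ := max_lt_iff.1 hα
  exact reverse_holder_weight (w := fun τ => Fker α β η μ k x τ * τ ^ k) hconj hx hm
    (fun τ hτ => mul_nonneg (Fker_nonneg hk h0 (by linarith) hη2 hτ.1 hτ.2)
      (rpow_nonneg hτ.1.le k)) hfc hgc hfpos hgpos hfin_f hfin_g hbd
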